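/- Let (X, μ) be a finite measure space. Let b_{1,n}, b_1 be integrable functions such that {b_{1,n}} converges to b_1 weakly in L^1(μ), i.e. ∫_X b_{1,n} φ dμ → ∫_X b_1 φ dμ for every bounded measurable φ : X → ℝ. Let {b_{2,n}} be a sequence of measurable functions and C > 0 a constant with |b_{2,n}| ≤ C μ-a.e. for every n, such that b_{2,n} → b_2 μ-a.e. Then ∫_X b_{1,n} b_{2,n} dμ → ∫_X b_1 b_2 dμ. -/

import Mathlib

open MeasureTheory Filter Topology

/-!
A bounded sequence `b₂ n` that converges a.e. converges in `L¹(ν)` for every finite `ν ≪ μ`, but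
in general not in `L∞`. Since the `b₁ n` converge only weakly, one needs that the functionals
`φ ↦ ∫ φ b₁ n` are asymptotically equicontinuous in `L¹(ν)` on the order interval `{|φ| ≤ C}`, the
content of the Vitali–Hahn–Saks theorem. All of them are bounded functionals on `L¹(ν)` for
`ν = (∑ wₙ |b₁ n|) μ` with suitable weights `wₙ > 0`. The order interval is complete, so by Baire
they are uniformly close to their limit near one of its points `z`. Equicontinuity spreads from
`z` to the whole interval because of the lattice structure: a small difference `x - y` of two
elements equals `u - v` with `u` and `v` in the interval and within `‖x - y‖` of `z`.
-/

section BanachLattice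

variable {E : Type*}

theorem exists_mem_Icc_sub_eq_sub [AddCommGroup E] [Lattice E] [IsOrderedAddMonoid E]
    {a b x y z : E} (hx : x ∈ Set.Icc a b) (hy : y ∈ Set.Icc a b) (hz : z ∈ Set.Icc a b) :
    ∃ u ∈ Set.Icc a b, ∃ v ∈ Set.Icc a b,
      u - v = x - y ∧ |u - z| ≤ |x - y| ∧ |v - z| ≤ |x - y| := by
  set g := x - y with hg
  have hab : a ≤ b := hz.1.trans hz.2
  have hagb : a + g ≤ b := calc
    a + g ≤ y + g := by gcongr; exact hy.1
    _ = x := by rw [hg, add_sub_cancel]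
    _ ≤ b := hx.2
  have habg : a ≤ b + g := calc
    a ≤ x := hx.1
    _ = y + g := by rw [hg, add_sub_cancel]
    _ ≤ b + g := by gcongr; exact hy.2
  let u := a ⊔ (b ⊓ (z + g))
  have hu_le {w : E} (ha : a ≤ w) (hzg : z + g ≤ w) : u ≤ w :=
    sup_le ha (inf_le_right.trans hzg)
  have hle_u {w : E} (hb : w ≤ b) (hzg : w ≤ z + g) : w ≤ u :=
    le_sup_of_le_right (le_inf hb hzg)
  have hu_le_add {s : E} (hs : 0 ≤ s) (hgs : g ≤ s) : u ≤ z + s :=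
    hu_le (le_add_of_le_of_nonneg hz.1 hs) (add_le_add_right hgs z)
  have hadd_le_u {t : E} (ht : t ≤ 0) (htg : t ≤ g) : z + t ≤ u :=
    hle_u (add_le_of_le_of_nonpos hz.2 ht) (add_le_add_right htg z)
  have hneg_abs_le : -|g| ≤ g := neg_le.1 (neg_le_abs g)
  have habs {w : E} (hle : w ≤ z + |g|) (hge : z + -|g| ≤ w) : |w - z| ≤ |g| :=
    abs_le'.2 ⟨sub_le_iff_le_add'.2 hle, neg_le.1 (le_sub_iff_add_le'.2 hge)⟩
  refine ⟨u, ⟨le_sup_left, sup_le hab inf_le_left⟩, u - g, ⟨?_, ?_⟩, sub_sub_cancel u g,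
    habs ?_ ?_, habs ?_ ?_⟩
  · exact le_sub_iff_add_le.2 (hle_u hagb (by gcongr; exact hz.1))
  · exact sub_le_iff_le_add.2 (hu_le habg (by gcongr; exact hz.2))
  · exact hu_le_add (abs_nonneg g) (le_abs_self g)
  · exact hadd_le_u (neg_nonpos.2 (abs_nonneg g)) hneg_abs_le
  · rw [sub_le_iff_le_add, add_assoc]
    exact hu_le_add (neg_le_iff_add_nonneg'.1 hneg_abs_le) (le_add_of_nonneg_left (abs_nonneg g))
  · rw [le_sub_iff_add_le, add_assoc]
    exact hadd_le_u (neg_add_nonpos_iff.2 (le_abs_self g))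
      (add_le_of_nonpos_left (neg_nonpos.2 (abs_nonneg g)))

theorem exists_eventually_nhds_forall_dist_le_of_tendsto {Y F : Type*} [TopologicalSpace Y]
    [BaireSpace Y] [Nonempty Y] [PseudoMetricSpace F] {u : ℕ → Y → F} {v : Y → F}
    (hu : ∀ n, Continuous (u n)) (hv : Continuous v)
    (h : ∀ y, Tendsto (fun n => u n y) atTop (𝓝 (v y))) {ε : ℝ} (hε : 0 < ε) :
    ∃ z N, ∀ᶠ y in 𝓝 z, ∀ n ≥ N, dist (u n y) (v y) ≤ ε := by
  let A : ℕ → Set Y := fun N => ⋂ n ≥ N, {y | dist (u n y) (v y) ≤ ε}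
  have hA : ∀ N, IsClosed (A N) := fun N =>
    isClosed_biInter fun n _ => isClosed_le ((hu n).dist hv) continuous_const
  have hA_univ : ⋃ N, A N = Set.univ := by
    refine Set.eq_univ_of_forall fun y => Set.mem_iUnion.2 ?_
    obtain ⟨N, hN⟩ := Metric.tendsto_atTop.1 (h y) ε hε
    exact ⟨N, Set.mem_iInter₂.2 fun n hn => (hN n hn).le⟩
  obtain ⟨N, z, hz⟩ := nonempty_interior_of_iUnion_of_closed hA hA_univ
  exact ⟨z, N, mem_of_superset (mem_interior_iff_mem_nhds.1 hz) fun _ => Set.mem_iInter₂.1⟩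

variable [NormedAddCommGroup E] [Lattice E] [HasSolidNorm E] [IsOrderedAddMonoid E]
  [CompleteSpace E] {F L : Type*} [SeminormedAddCommGroup F] [FunLike L E F]
  [AddMonoidHomClass L E F] {Λ : ℕ → L} {Λlim : L} {a b : E}

theorem exists_forall_mem_Icc_dist_map_sub_le (hΛ : ∀ n, Continuous (Λ n))
    (hΛlim : Continuous Λlim) (hab : a ≤ b)
    (h : ∀ x ∈ Set.Icc a b, Tendsto (fun n => Λ n x) atTop (𝓝 (Λlim x))) {ε : ℝ} (hε : 0 < ε) :
    ∃ δ > 0, ∃ N, ∀ n ≥ N, ∀ x ∈ Set.Icc a b, ∀ y ∈ Set.Icc a b, ‖x - y‖ < δ →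
      dist (Λ n (x - y)) (Λlim (x - y)) ≤ ε := by
  have : CompleteSpace (Set.Icc a b) := isClosed_Icc.completeSpace_coe
  have : Nonempty (Set.Icc a b) := ⟨⟨a, Set.left_mem_Icc.2 hab⟩⟩
  obtain ⟨z, N, hz⟩ := exists_eventually_nhds_forall_dist_le_of_tendsto
    (u := fun n (x : Set.Icc a b) => Λ n x) (v := fun x => Λlim x)
    (fun n => (hΛ n).comp continuous_subtype_val) (hΛlim.comp continuous_subtype_val)
    (fun x => h x x.2) (half_pos hε)
  obtain ⟨δ, hδ, hball⟩ := Metric.eventually_nhds_iff.1 hz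
  have hnear : ∀ n ≥ N, ∀ w ∈ Set.Icc a b, ‖w - z‖ < δ → dist (Λ n w) (Λlim w) ≤ ε / 2 :=
    fun n hn w hw hwz => hball (y := ⟨w, hw⟩)
      (by rwa [Subtype.dist_eq, dist_eq_norm]) n hn
  refine ⟨δ, hδ, N, fun n hn x hx y hy hxy => ?_⟩
  obtain ⟨u, hu, v, hv, huv, huz, hvz⟩ := exists_mem_Icc_sub_eq_sub hx hy z.2
  rw [← huv, map_sub, map_sub, ← add_halves ε]
  exact (dist_sub_sub_le _ _ _ _).trans <| add_le_add
    (hnear n hn u hu ((norm_le_norm_of_abs_le_abs huz).trans_lt hxy))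
    (hnear n hn v hv ((norm_le_norm_of_abs_le_abs hvz).trans_lt hxy))

theorem tendsto_map_of_tendsto_of_mem_Icc (hΛ : ∀ n, Continuous (Λ n)) (hΛlim : Continuous Λlim)
    (h : ∀ x ∈ Set.Icc a b, Tendsto (fun n => Λ n x) atTop (𝓝 (Λlim x)))
    {x : ℕ → E} {xlim : E} (hx : ∀ n, x n ∈ Set.Icc a b) (hlim : Tendsto x atTop (𝓝 xlim)) :
    Tendsto (fun n => Λ n (x n)) atTop (𝓝 (Λlim xlim)) := by
  have hxlim : xlim ∈ Set.Icc a b := isClosed_Icc.mem_of_tendsto hlim (.of_forall hx)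
  have hdist : Tendsto (fun n => Λ n (x n - xlim) - Λlim (x n - xlim)) atTop (𝓝 0) := by
    refine Metric.nhds_basis_closedBall.tendsto_right_iff.2 fun ε hε => ?_
    obtain ⟨δ, hδ, N, hN⟩ := exists_forall_mem_Icc_dist_map_sub_le hΛ hΛlim
      (hxlim.1.trans hxlim.2) h hε
    filter_upwards [eventually_ge_atTop N, Metric.tendsto_nhds.1 hlim δ hδ] with n hn hxn
    rw [mem_closedBall_zero_iff, ← dist_eq_norm]
    exact hN n hn _ (hx n) _ hxlim (by rwa [← dist_eq_norm])
  have hΛx : Tendsto (fun n => Λlim (x n)) atTop (𝓝 (Λlim xlim)) :=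
    (hΛlim.tendsto xlim).comp hlim
  have hsum := (hdist.add (h xlim hxlim)).add (hΛx.sub_const (Λlim xlim))
  rw [zero_add, sub_self, add_zero] at hsum
  refine hsum.congr fun n => ?_
  rw [map_sub, map_sub]
  abel

end BanachLattice

section IntegralFunctional

variable {X : Type*} [MeasurableSpace X]

theorem exists_isFiniteMeasure_forall_le_smul {ι : Type*} [Countable ι] (m : ι → Measure X)
    [∀ i, IsFiniteMeasure (m i)] :
    ∃ ν : Measure X, IsFiniteMeasure ν ∧ ν ≪ Measure.sum m ∧
      ∃ c : ι → NNReal, ∀ i, m i ≤ c i • ν := by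
  obtain ⟨w, hw_pos, hw_sum⟩ := ENNReal.exists_pos_tsum_mul_lt_of_countable one_ne_zero
    (fun i => m i Set.univ) fun i => measure_ne_top (m i) _
  refine ⟨Measure.sum fun i => w i • m i, ⟨?_⟩, ?_, fun i => (w i)⁻¹, fun i => ?_⟩
  · rw [Measure.sum_apply _ .univ]
    refine lt_of_eq_of_lt (tsum_congr fun i => ?_) (hw_sum.trans ENNReal.one_lt_top)
    rw [Measure.smul_apply, ENNReal.smul_def, smul_eq_mul, mul_comm]
  · exact Measure.absolutelyContinuous_sum_left fun i =>
      (Measure.AbsolutelyContinuous.smul_left .rfl (w i)).trans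
        (Measure.le_sum m i).absolutelyContinuous
  · calc m i = (w i)⁻¹ • w i • m i := (inv_smul_smul₀ (hw_pos i).ne' _).symm
      _ ≤ (w i)⁻¹ • Measure.sum fun i => w i • m i := by
        gcongr
        exact Measure.le_sum (fun i => w i • m i) i

variable {μ ν : Measure X} {F : Type*} [NormedAddCommGroup F]

theorem exists_isFiniteMeasure_forall_withDensity_enorm_le_smul {ι : Type*} [Countable ι]
    {f : ι → X → F} (hf : ∀ i, Integrable (f i) μ) :
    ∃ ν : Measure X, IsFiniteMeasure ν ∧ ν ≪ μ ∧
      ∃ c : ι → NNReal, ∀ i, μ.withDensity (fun x => ‖f i x‖ₑ) ≤ c i • ν := by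
  have (i : ι) : IsFiniteMeasure (μ.withDensity fun x => ‖f i x‖ₑ) :=
    isFiniteMeasure_withDensity (hf i).2.ne
  obtain ⟨ν, hν, hac, hle⟩ :=
    exists_isFiniteMeasure_forall_le_smul fun i => μ.withDensity fun x => ‖f i x‖ₑ
  have hsum : Measure.sum (fun i => μ.withDensity fun x => ‖f i x‖ₑ) ≪ μ :=
    Measure.absolutelyContinuous_sum_left fun i => withDensity_absolutelyContinuous μ _
  exact ⟨ν, hν, hac.trans hsum, hle⟩

variable [NormedSpace ℝ F] {f : X → F} {c : NNReal}

theorem lintegral_enorm_smul_le_of_withDensity_enorm_le (hf : AEStronglyMeasurable f μ)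
    (hfν : μ.withDensity (fun x => ‖f x‖ₑ) ≤ c • ν) {φ : X → ℝ} (hφ : AEStronglyMeasurable φ ν) :
    ∫⁻ x, ‖φ x • f x‖ₑ ∂μ ≤ c * ∫⁻ x, ‖φ x‖ₑ ∂ν := by
  have hac : μ.withDensity (fun x => ‖f x‖ₑ) ≪ ν := Measure.absolutelyContinuous_of_le_smul hfν
  calc ∫⁻ x, ‖φ x • f x‖ₑ ∂μ
      = ∫⁻ x, ‖φ x‖ₑ ∂μ.withDensity (fun x => ‖f x‖ₑ) := by
        rw [lintegral_withDensity_eq_lintegral_mul₀' hf.enorm (hφ.mono_ac hac).enorm]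
        simp only [enorm_smul, Pi.mul_apply, mul_comm]
    _ ≤ ∫⁻ x, ‖φ x‖ₑ ∂(c • ν) := lintegral_mono' hfν le_rfl
    _ = c * ∫⁻ x, ‖φ x‖ₑ ∂ν := by rw [lintegral_smul_measure, ENNReal.smul_def, smul_eq_mul]

theorem smul_ae_eq_smul_of_withDensity_enorm_ac (hf : AEStronglyMeasurable f μ)
    (hfν : μ.withDensity (fun x => ‖f x‖ₑ) ≪ ν) {φ ψ : X → ℝ} (h : φ =ᵐ[ν] ψ) :
    (fun x => φ x • f x) =ᵐ[μ] fun x => ψ x • f x := by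
  filter_upwards [(ae_withDensity_iff' hf.enorm).1 (hfν.ae_le h)] with x hx
  by_cases hfx : f x = 0
  · simp only [hfx, smul_zero]
  · rw [hx (enorm_ne_zero.2 hfx)]

theorem integrable_smul_of_withDensity_enorm_le (hf : AEStronglyMeasurable f μ)
    (hfν : μ.withDensity (fun x => ‖f x‖ₑ) ≤ c • ν) {φ : X → ℝ} (hφ : Integrable φ ν) :
    Integrable (fun x => φ x • f x) μ := by
  have hac : μ.withDensity (fun x => ‖f x‖ₑ) ≪ ν := Measure.absolutelyContinuous_of_le_smul hfν
  refine ⟨(hφ.1.stronglyMeasurable_mk.aestronglyMeasurable.smul hf).congr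
    (smul_ae_eq_smul_of_withDensity_enorm_ac hf hac hφ.1.ae_eq_mk.symm), ?_⟩
  exact (lintegral_enorm_smul_le_of_withDensity_enorm_le hf hfν hφ.1).trans_lt
    (ENNReal.mul_lt_top ENNReal.coe_lt_top hφ.2)

/-- Integration against the vector-valued density `f`, as a functional `φ ↦ ∫ φ • f ∂μ` on
`L¹(ν)`, where `ν` is any measure dominating `‖f‖ μ` up to a constant factor. -/
noncomputable def integralSMulCLM (hf : AEStronglyMeasurable f μ)
    (hfν : μ.withDensity (fun x => ‖f x‖ₑ) ≤ c • ν) : Lp ℝ 1 ν →L[ℝ] F :=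
  have hac : μ.withDensity (fun x => ‖f x‖ₑ) ≪ ν := Measure.absolutelyContinuous_of_le_smul hfν
  have hint (φ : Lp ℝ 1 ν) : Integrable (fun x => φ x • f x) μ :=
    integrable_smul_of_withDensity_enorm_le hf hfν (L1.integrable_coeFn φ)
  LinearMap.mkContinuous
    { toFun := fun φ => ∫ x, φ x • f x ∂μ
      map_add' := fun φ ψ => by
        rw [← integral_add (hint φ) (hint ψ), integral_congr_ae
          (smul_ae_eq_smul_of_withDensity_enorm_ac hf hac (Lp.coeFn_add φ ψ))]
        simp only [Pi.add_apply, add_smul]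
      map_smul' := fun r φ => by
        rw [RingHom.id_apply, ← integral_smul, integral_congr_ae
          (smul_ae_eq_smul_of_withDensity_enorm_ac hf hac (Lp.coeFn_smul r φ))]
        simp only [Pi.smul_apply, smul_assoc] }
    c fun φ => by
      have hle := (enorm_integral_le_lintegral_enorm _).trans
        (lintegral_enorm_smul_le_of_withDensity_enorm_le hf hfν (Lp.aestronglyMeasurable φ))
      rw [L1.norm_def, ← toReal_enorm, ← ENNReal.coe_toReal c, ← ENNReal.toReal_mul]
      exact ENNReal.toReal_mono (ENNReal.mul_ne_top ENNReal.coe_ne_top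
        (L1.hasFiniteIntegral_coeFn φ).ne) hle

theorem integralSMulCLM_apply_of_ae_eq (hf : AEStronglyMeasurable f μ)
    (hfν : μ.withDensity (fun x => ‖f x‖ₑ) ≤ c • ν) {φ : Lp ℝ 1 ν} {ψ : X → ℝ} (h : φ =ᵐ[ν] ψ) :
    integralSMulCLM hf hfν φ = ∫ x, ψ x • f x ∂μ :=
  integral_congr_ae (smul_ae_eq_smul_of_withDensity_enorm_ac hf
    (Measure.absolutelyContinuous_of_le_smul hfν) h)

end IntegralFunctional

section BoundedFunctions

variable {X : Type*} [MeasurableSpace X] {μ : Measure X}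

theorem exists_measurable_forall_abs_le_ae_eq {φ : X → ℝ} (hφ : AEMeasurable φ μ) {C : ℝ}
    (hφC : ∀ᵐ x ∂μ, |φ x| ≤ C) :
    ∃ ψ : X → ℝ, Measurable ψ ∧ (∀ x, |ψ x| ≤ |C|) ∧ φ =ᵐ[μ] ψ := by
  obtain ⟨ψ, hψ, hmem, h⟩ := hφ.exists_ae_eq_range_subset (t := Set.Icc (-|C|) |C|)
    (hφC.mono fun x hx => abs_le.1 (hx.trans (le_abs_self C)))
    ⟨0, neg_nonpos.2 (abs_nonneg C), abs_nonneg C⟩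
  exact ⟨ψ, hψ, fun x => abs_le.2 (hmem (Set.mem_range_self x)), h⟩

theorem mem_Icc_const_iff_ae_abs_le [IsFiniteMeasure μ] {p : ENNReal} {φ : Lp ℝ p μ} {C : ℝ} :
    φ ∈ Set.Icc (Lp.const p μ (-C)) (Lp.const p μ C) ↔ ∀ᵐ x ∂μ, |φ x| ≤ C := by
  rw [Set.mem_Icc, ← Lp.coeFn_le, ← Lp.coeFn_le, EventuallyLE, EventuallyLE, ← eventually_and]
  refine eventually_congr ?_
  filter_upwards [Lp.coeFn_const p μ (-C), Lp.coeFn_const p μ C] with x hneg hpos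
  rw [hneg, hpos, Function.const_apply, Function.const_apply, abs_le]

theorem tendsto_toL1_of_dominated_convergence {G : Type*} [NormedAddCommGroup G]
    {φ : ℕ → X → G} {φlim : X → G} {bound : X → ℝ} (hφ : ∀ n, Integrable (φ n) μ)
    (hφlim : Integrable φlim μ) (hbound : HasFiniteIntegral bound μ)
    (hle : ∀ n, ∀ᵐ x ∂μ, ‖φ n x‖ ≤ bound x)
    (hconv : ∀ᵐ x ∂μ, Tendsto (fun n => φ n x) atTop (𝓝 (φlim x))) :
    Tendsto (fun n => (hφ n).toL1 (φ n)) atTop (𝓝 (hφlim.toL1 φlim)) := by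
  rw [tendsto_iff_edist_tendsto_0]
  simp only [Integrable.edist_toL1_toL1]
  simpa only [edist_dist, dist_eq_norm] using
    tendsto_lintegral_norm_of_dominated_convergence (fun n => (hφ n).1) hbound hle hconv

theorem exists_tendsto_Lp_one_mem_Icc_const_ae_eq [IsFiniteMeasure μ] {φ : ℕ → X → ℝ}
    {φlim : X → ℝ} {C : ℝ} (hφ : ∀ n, AEStronglyMeasurable (φ n) μ)
    (hφC : ∀ n, ∀ᵐ x ∂μ, |φ n x| ≤ C)
    (hconv : ∀ᵐ x ∂μ, Tendsto (fun n => φ n x) atTop (𝓝 (φlim x))) :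
    ∃ (Φ : ℕ → Lp ℝ 1 μ) (Φlim : Lp ℝ 1 μ), (∀ n, Φ n =ᵐ[μ] φ n) ∧ Φlim =ᵐ[μ] φlim ∧
      (∀ n, Φ n ∈ Set.Icc (Lp.const 1 μ (-C)) (Lp.const 1 μ C)) ∧
      Tendsto Φ atTop (𝓝 Φlim) := by
  have hint (n : ℕ) : Integrable (φ n) μ := .of_bound (hφ n) C (hφC n)
  have hφlimC : ∀ᵐ x ∂μ, |φlim x| ≤ C := by
    filter_upwards [hconv, ae_all_iff.2 hφC] with x hx hxC
    exact le_of_tendsto' hx.abs hxC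
  have hintlim : Integrable φlim μ :=
    .of_bound (aestronglyMeasurable_of_tendsto_ae atTop hφ hconv) C hφlimC
  refine ⟨fun n => (hint n).toL1 (φ n), hintlim.toL1 φlim, fun n => (hint n).coeFn_toL1,
    hintlim.coeFn_toL1, fun n => mem_Icc_const_iff_ae_abs_le.2 ?_,
    tendsto_toL1_of_dominated_convergence hint hintlim (hasFiniteIntegral_const C) hφC hconv⟩
  filter_upwards [(hint n).coeFn_toL1, hφC n] with x hx hxC
  rwa [hx]

end BoundedFunctions

theorem stmt0_general {X F : Type*} [MeasurableSpace X] {μ : Measure X} [NormedAddCommGroup F]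
    [NormedSpace ℝ F] [CompleteSpace F] {b₁ : ℕ → X → F} {b₁lim : X → F} {b₂ : ℕ → X → ℝ}
    {b₂lim : X → ℝ} {C : ℝ}
    (hb₁ : ∀ n, Integrable (b₁ n) μ) (hb₁lim : Integrable b₁lim μ)
    (hweak : ∀ φ : X → ℝ, Measurable φ → (∃ M : ℝ, ∀ x, |φ x| ≤ M) →
      Tendsto (fun n => ∫ x, φ x • b₁ n x ∂μ) atTop (𝓝 (∫ x, φ x • b₁lim x ∂μ)))
    (hb₂ : ∀ n, AEStronglyMeasurable (b₂ n) μ) (hb₂bdd : ∀ n, ∀ᵐ x ∂μ, |b₂ n x| ≤ C)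
    (hb₂conv : ∀ᵐ x ∂μ, Tendsto (fun n => b₂ n x) atTop (𝓝 (b₂lim x))) :
    Tendsto (fun n => ∫ x, b₂ n x • b₁ n x ∂μ) atTop (𝓝 (∫ x, b₂lim x • b₁lim x ∂μ)) := by
  obtain ⟨ν, _, hνμ, c, hc⟩ := exists_isFiniteMeasure_forall_withDensity_enorm_le_smul
    (f := fun o : Option ℕ => o.elim b₁lim b₁) (Option.rec hb₁lim hb₁)
  let Λ (n : ℕ) : Lp ℝ 1 ν →L[ℝ] F := integralSMulCLM (hb₁ n).1 (hc (some n))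
  let Λlim : Lp ℝ 1 ν →L[ℝ] F := integralSMulCLM hb₁lim.1 (hc none)
  have hΛ_apply (n : ℕ) {φ : Lp ℝ 1 ν} {ψ : X → ℝ} (h : φ =ᵐ[ν] ψ) :
      Λ n φ = ∫ x, ψ x • b₁ n x ∂μ := integralSMulCLM_apply_of_ae_eq _ _ h
  have hΛlim_apply {φ : Lp ℝ 1 ν} {ψ : X → ℝ} (h : φ =ᵐ[ν] ψ) :
      Λlim φ = ∫ x, ψ x • b₁lim x ∂μ := integralSMulCLM_apply_of_ae_eq _ _ h
  have hΛ : ∀ φ ∈ Set.Icc (Lp.const 1 ν (-C)) (Lp.const 1 ν C),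
      Tendsto (fun n => Λ n φ) atTop (𝓝 (Λlim φ)) := fun φ hφ => by
    obtain ⟨ψ, hψ, hψC, hφψ⟩ := exists_measurable_forall_abs_le_ae_eq
      (Lp.aestronglyMeasurable φ).aemeasurable (mem_Icc_const_iff_ae_abs_le.1 hφ)
    simpa only [hΛ_apply _ hφψ, hΛlim_apply hφψ] using hweak ψ hψ ⟨|C|, hψC⟩
  obtain ⟨Φ, Φlim, hΦ, hΦlim, hmem, hconv⟩ := exists_tendsto_Lp_one_mem_Icc_const_ae_eq
    (fun n => (hb₂ n).mono_ac hνμ) (fun n => hνμ.ae_le (hb₂bdd n)) (hνμ.ae_le hb₂conv)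
  have hlim : Tendsto (fun n => Λ n (Φ n)) atTop (𝓝 (Λlim Φlim)) :=
    tendsto_map_of_tendsto_of_mem_Icc (fun n => (Λ n).continuous) Λlim.continuous hΛ hmem hconv
  simpa only [hΛ_apply _ (hΦ _), hΛlim_apply hΦlim] using hlim

/-- Let `(X, μ)` be a finite measure space, `{b₁ n}` integrable functions
converging weakly in `L¹(μ)` to `b₁lim` (i.e. against every bounded measurable test function),
and `{b₂ n}` measurable functions uniformly bounded a.e. by `C > 0` converging a.e. to `b₂lim`.
Then `∫ b₁ n * b₂ n dμ → ∫ b₁lim * b₂lim dμ`. -/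
theorem stmt0 {X : Type*} [MeasurableSpace X] (μ : Measure X) [IsFiniteMeasure μ]
    (b₁ : ℕ → X → ℝ) (b₁lim : X → ℝ) (b₂ : ℕ → X → ℝ) (b₂lim : X → ℝ) (C : ℝ)
    (hC : 0 < C)
    (hb₁int : ∀ n, Integrable (b₁ n) μ) (hb₁limint : Integrable b₁lim μ)
    (hweak : ∀ φ : X → ℝ, Measurable φ → (∃ M : ℝ, ∀ x, |φ x| ≤ M) →
      Tendsto (fun n => ∫ x, b₁ n x * φ x ∂μ) atTop (𝓝 (∫ x, b₁lim x * φ x ∂μ)))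
    (hb₂meas : ∀ n, Measurable (b₂ n))
    (hb₂bdd : ∀ n, ∀ᵐ x ∂μ, |b₂ n x| ≤ C)
    (hb₂conv : ∀ᵐ x ∂μ, Tendsto (fun n => b₂ n x) atTop (𝓝 (b₂lim x))) :
    Tendsto (fun n => ∫ x, b₁ n x * b₂ n x ∂μ) atTop (𝓝 (∫ x, b₁lim x * b₂lim x ∂μ)) := by
  simp only [mul_comm (b₁ _ _), mul_comm (b₁lim _)] at hweak ⊢
  exact stmt0_general hb₁int hb₁limint hweak (fun n => (hb₂meas n).aestronglyMeasurable) hb₂bdd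
    hb₂conv
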